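/- Let φ : (0,∞) → (0,∞) be convex and strictly decreasing, L₁, K₁,...,Kₙ star bodies in ℝⁿ, and 1 ≤ r ≤ n. Then the dual Orlicz–Aleksandrov–Fenchel inequality holds: Ṽ_φ(L₁,K₁,K₂,...,Kₙ) ≥ Ṽ(L₁,K₂,...,Kₙ) · φ( ∏_{i=1}^r Ṽ(Kᵢ,...,Kᵢ,K_{r+1},...,Kₙ)^{1/r} / Ṽ(L₁,K₂,...,Kₙ) ). If φ is strictly convex, equality holds if and only if L₁, K₁, ..., K_r are all dilations of each other. -/

import Mathlib

open MeasureTheory Metric Real Set Finset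

/-- The surface (spherical) measure on the unit sphere `S^{n-1} ⊆ ℝⁿ`. -/
noncomputable def sphereσ (n : ℕ) : Measure (sphere (0 : EuclideanSpace ℝ (Fin n)) 1) :=
  μH[(n : ℝ) - 1]

open Module Topology

/-!
Jensen's inequality for `φ` and the weight `ρL · ∏_{j ≥ 2} ρⱼ` gives the Orlicz–Minkowski inequality
`Ṽ_φ ≥ Ṽ(L₁,K₂,…,Kₙ) · φ(Ṽ(K₁,…,Kₙ) / Ṽ(L₁,K₂,…,Kₙ))`. By Hölder's inequality, which is the
pointwise weighted AM–GM inequality for functions of integral one, `Ṽ(K₁,…,Kₙ)` is at most the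
product in the statement (dual Aleksandrov–Fenchel), and `φ` is decreasing. Equality forces equality
in both steps, hence pointwise in Jensen and AM–GM, because the measure charges every nonempty open
set. The spherical measure does so, and is finite, because stereographic projections are locally
Lipschitz in both directions.
-/

section HausdorffMeasure

variable {X F : Type*} [EMetricSpace X] [MeasurableSpace X] [BorelSpace X]
  [NormedAddCommGroup F] [NormedSpace ℝ F] [FiniteDimensional ℝ F] [MeasurableSpace F]
  [BorelSpace F] {e : OpenPartialHomeomorph X F} {x : X}

lemma hausdorffMeasure_pos_of_locallyLipschitzOn (he : LocallyLipschitzOn e.source e)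
    (hx : x ∈ e.source) {U : Set X} (hU : U ∈ 𝓝 x) : 0 < μH[finrank ℝ F] U := by
  obtain ⟨K, s, hs, hK⟩ := he hx
  rw [e.open_source.nhdsWithin_eq hx] at hs
  have h_image : e '' (U ∩ s) ∈ 𝓝 (e x) := e.image_mem_nhds hx (Filter.inter_mem hU hs)
  have h_le : μH[finrank ℝ F] (e '' (U ∩ s)) ≤ K ^ (finrank ℝ F : ℝ) * μH[finrank ℝ F] (U ∩ s) :=
    (hK.mono inter_subset_right).hausdorffMeasure_image_le (Nat.cast_nonneg _)
  refine pos_iff_ne_zero.2 fun h_zero ↦ ?_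
  rw [measure_mono_null inter_subset_left h_zero, mul_zero] at h_le
  exact (Measure.measure_pos_of_mem_nhds _ h_image).not_ge h_le

lemma finiteAtFilter_hausdorffMeasure_of_locallyLipschitzOn_symm
    (he : LocallyLipschitzOn e.target e.symm) (hx : x ∈ e.source) :
    (μH[finrank ℝ F] : Measure X).FiniteAtFilter (𝓝 x) := by
  obtain ⟨K, s, hs, hK⟩ := he (e.map_source hx)
  rw [e.open_target.nhdsWithin_eq (e.map_source hx)] at hs
  obtain ⟨t, ht, ht_top⟩ := (μH[finrank ℝ F] : Measure F).finiteAt_nhds (e x)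
  refine ⟨e.symm '' (s ∩ t), ?_, ?_⟩
  · simpa only [e.left_inv hx] using
      e.symm.image_mem_nhds (e.map_source hx) (Filter.inter_mem hs ht)
  · calc μH[finrank ℝ F] (e.symm '' (s ∩ t))
        ≤ K ^ (finrank ℝ F : ℝ) * μH[finrank ℝ F] (s ∩ t) :=
          (hK.mono inter_subset_left).hausdorffMeasure_image_le (Nat.cast_nonneg _)
      _ < ⊤ := ENNReal.mul_lt_top
          (ENNReal.rpow_lt_top_of_nonneg (Nat.cast_nonneg _) ENNReal.coe_ne_top)
          ((measure_mono inter_subset_right).trans_lt ht_top)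

end HausdorffMeasure

section Sphere

variable {E : Type*} [NormedAddCommGroup E] [InnerProductSpace ℝ E]

lemma locallyLipschitzOn_stereographic {v : E} (hv : ‖v‖ = 1) :
    LocallyLipschitzOn (stereographic hv).source (stereographic hv) := by
  intro u hu
  have hu_ne : innerSL ℝ v (u : E) ≠ 1 := by
    rw [innerSL_apply_apply, Ne, inner_eq_one_iff_of_norm_eq_one hv (norm_eq_of_mem_sphere u)]
    exact fun h ↦ hu (Subtype.ext h.symm)
  have h_open : IsOpen {x : E | innerSL ℝ v x ≠ 1} :=
    isOpen_ne_fun (innerSL ℝ v).continuous continuous_const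
  obtain ⟨K, s, hs, hK⟩ :=
    (contDiffOn_stereoToFun.contDiffAt (h_open.mem_nhds hu_ne)).exists_lipschitzOnWith
  exact ⟨K, Subtype.val ⁻¹' s,
    mem_nhdsWithin_of_mem_nhds (continuous_subtype_val.continuousAt hs),
    fun _ hx _ hy ↦ hK hx hy⟩

lemma locallyLipschitz_stereographic_symm {v : E} (hv : ‖v‖ = 1) :
    LocallyLipschitz (stereographic hv).symm := by
  intro w
  obtain ⟨K, s, hs, hK⟩ :=
    (contDiff_stereoInvFunAux (v := v)).contDiffAt (x := (w : E)) |>.exists_lipschitzOnWith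
  exact ⟨K, Subtype.val ⁻¹' s, continuous_subtype_val.continuousAt hs, fun _ hx _ hy ↦ hK hx hy⟩

lemma mem_source_stereographic_neg (u : sphere (0 : E) 1) :
    u ∈ (stereographic (norm_eq_of_mem_sphere (-u))).source := by
  rw [stereographic_source, Set.mem_compl_singleton_iff]
  exact ne_neg_of_mem_unit_sphere ℝ u

variable [FiniteDimensional ℝ E]

lemma finrank_orthogonal_span_singleton_of_mem_sphere (u : sphere (0 : E) 1) :
    (finrank ℝ (ℝ ∙ (u : E))ᗮ : ℝ) = finrank ℝ E - 1 := by
  have h := (ℝ ∙ (u : E)).finrank_add_finrank_orthogonal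
  rw [finrank_span_singleton (ne_zero_of_mem_unit_sphere u)] at h
  rw [← h]
  push_cast
  ring

variable [MeasurableSpace E] [BorelSpace E]

lemma isOpenPosMeasure_hausdorffMeasure_sphere :
    (μH[(finrank ℝ E : ℝ) - 1] : Measure (sphere (0 : E) 1)).IsOpenPosMeasure := by
  refine ⟨fun U hU ⟨u, hu⟩ ↦ ?_⟩
  rw [← finrank_orthogonal_span_singleton_of_mem_sphere (-u)]
  exact (hausdorffMeasure_pos_of_locallyLipschitzOn (locallyLipschitzOn_stereographic _)
    (mem_source_stereographic_neg u) (hU.mem_nhds hu)).ne'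

lemma isFiniteMeasure_hausdorffMeasure_sphere :
    IsFiniteMeasure (μH[(finrank ℝ E : ℝ) - 1] : Measure (sphere (0 : E) 1)) := by
  suffices IsLocallyFiniteMeasure (μH[(finrank ℝ E : ℝ) - 1] : Measure (sphere (0 : E) 1)) by
    infer_instance
  refine ⟨fun u ↦ ?_⟩
  rw [← finrank_orthogonal_span_singleton_of_mem_sphere (-u)]
  exact finiteAtFilter_hausdorffMeasure_of_locallyLipschitzOn_symm
    (locallyLipschitz_stereographic_symm _).locallyLipschitzOn (mem_source_stereographic_neg u)

instance sphereσ_isOpenPosMeasure (n : ℕ) : (sphereσ n).IsOpenPosMeasure := by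
  simpa only [sphereσ, finrank_euclideanSpace_fin] using
    isOpenPosMeasure_hausdorffMeasure_sphere (E := EuclideanSpace ℝ (Fin n))

instance sphereσ_isFiniteMeasure (n : ℕ) : IsFiniteMeasure (sphereσ n) := by
  simpa only [sphereσ, finrank_euclideanSpace_fin] using
    isFiniteMeasure_hausdorffMeasure_sphere (E := EuclideanSpace ℝ (Fin n))

end Sphere

section Order

lemma strictAntiOn_of_strictConvexOn_of_antitoneOn {s : Set ℝ} {φ : ℝ → ℝ}
    (hφ : StrictConvexOn ℝ s φ) (hφ_anti : AntitoneOn φ s) : StrictAntiOn φ s := by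
  intro x hx y hy hxy
  by_contra! h_le
  obtain ⟨z, hxz, hzy⟩ := exists_between hxy
  have hz : z ∈ s := hφ.1.ordConnected.out hx hy ⟨hxz.le, hzy.le⟩
  have h_lt : φ z < max (φ x) (φ y) := hφ.lt_on_openSegment hx hy hxy.ne
    (by rw [openSegment_eq_Ioo hxy]; exact ⟨hxz, hzy⟩)
  rw [max_eq_right h_le] at h_lt
  exact h_lt.not_ge (hφ_anti hz hy hzy.le)

lemma mul_map_div_le_mul_map_div {φ : ℝ → ℝ} {v t z : ℝ} (hφ : AntitoneOn φ (Ioi 0)) (hv : 0 < v)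
    (ht : 0 < t) (htz : t ≤ z) : v * φ (z / v) ≤ v * φ (t / v) :=
  mul_le_mul_of_nonneg_left (hφ (div_pos ht hv) (div_pos (ht.trans_le htz) hv)
    (div_le_div_of_nonneg_right htz hv.le)) hv.le

lemma mul_map_div_eq_mul_map_div_iff {φ : ℝ → ℝ} {v t z : ℝ} (hφ : InjOn φ (Ioi 0)) (hv : 0 < v)
    (ht : 0 < t) (hz : 0 < z) : v * φ (t / v) = v * φ (z / v) ↔ t = z := by
  rw [mul_right_inj' hv.ne', hφ.eq_iff (div_pos ht hv) (div_pos hz hv), div_left_inj' hv.ne']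

lemma exists_Icc_subset_of_continuous {X : Type*} [TopologicalSpace X] [CompactSpace X]
    [Nonempty X] {s : Set ℝ} {f : X → ℝ} (hs : Convex ℝ s) (hf : Continuous f)
    (hfs : ∀ x, f x ∈ s) : ∃ a b, Set.Icc a b ⊆ s ∧ ∀ x, f x ∈ Set.Icc a b := by
  obtain ⟨_, ⟨x, rfl⟩, hx⟩ := (isCompact_range hf).exists_isLeast (range_nonempty f)
  obtain ⟨_, ⟨y, rfl⟩, hy⟩ := (isCompact_range hf).exists_isGreatest (range_nonempty f)
  exact ⟨f x, f y, hs.ordConnected.out (hfs x) (hfs y),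
    fun z ↦ ⟨hx (mem_range_self z), hy (mem_range_self z)⟩⟩

lemma eq_iff_eq_and_eq_of_le_of_le {α : Type*} [PartialOrder α] {a b c : α} (hab : a ≤ b)
    (hbc : b ≤ c) : c = a ↔ c = b ∧ b = a :=
  ⟨fun h ↦ ⟨(h ▸ hab).antisymm hbc, (h ▸ hbc).antisymm hab⟩, fun h ↦ h.1.trans h.2⟩

end Order

section Dilate

variable {X : Type*} {f g h : X → ℝ}

/-- `IsDilate f g` says that `f` is a positive multiple of `g`; for radial functions of star bodies
it says that the bodies are dilates of each other. -/
def IsDilate (f g : X → ℝ) : Prop :=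
  ∃ c : ℝ, 0 < c ∧ ∀ x, f x = c * g x

namespace IsDilate

lemma symm : IsDilate f g → IsDilate g f := by
  rintro ⟨c, hc, hfg⟩
  exact ⟨c⁻¹, inv_pos.2 hc, fun x ↦ by rw [hfg, inv_mul_cancel_left₀ hc.ne']⟩

lemma trans : IsDilate f g → IsDilate g h → IsDilate f h := by
  rintro ⟨c, hc, hfg⟩ ⟨d, hd, hgh⟩
  exact ⟨c * d, mul_pos hc hd, fun x ↦ by rw [hfg, hgh, mul_assoc]⟩

end IsDilate

lemma isDilate_pow_mul_iff {q : X → ℝ} (hf : ∀ x, 0 ≤ f x) (hg : ∀ x, 0 ≤ g x)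
    (hq : ∀ x, q x ≠ 0) {r : ℕ} (hr : r ≠ 0) :
    IsDilate (fun x ↦ f x ^ r * q x) (fun x ↦ g x ^ r * q x) ↔ IsDilate f g := by
  constructor
  · rintro ⟨c, hc, hfg⟩
    refine ⟨c ^ (r : ℝ)⁻¹, rpow_pos_of_pos hc _, fun x ↦ ?_⟩
    have h_pow : f x ^ r = c * g x ^ r :=
      mul_right_cancel₀ (hq x) ((hfg x).trans (mul_assoc _ _ _).symm)
    rw [← pow_left_inj₀ (hf x) (mul_nonneg (rpow_nonneg hc.le _) (hg x)) hr, mul_pow,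
      rpow_inv_natCast_pow hc.le hr, h_pow]
  · rintro ⟨c, hc, hfg⟩
    exact ⟨c ^ r, pow_pos hc r, fun x ↦ by simp only [hfg, mul_pow, mul_assoc]⟩

lemma isDilate_iff_exists_div_eq [Nonempty X] (hf : ∀ x, 0 < f x) (hg : ∀ x, 0 < g x) :
    IsDilate f g ↔ ∃ c, ∀ x, f x / g x = c := by
  simp only [div_eq_iff (hg _).ne']
  refine ⟨fun ⟨c, _, hfg⟩ ↦ ⟨c, hfg⟩, fun ⟨c, hfg⟩ ↦ ⟨c, ?_, hfg⟩⟩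
  obtain ⟨x⟩ := ‹Nonempty X›
  exact pos_of_mul_pos_left (hfg x ▸ hf x) (hg x).le

end Dilate

section WithDensity

variable {X : Type*} [MeasurableSpace X] {μ : Measure X} {f w : X → ℝ}

lemma integral_withDensity_ofReal (hw : Measurable w) (hw_nonneg : ∀ x, 0 ≤ w x) :
    ∫ x, f x ∂μ.withDensity (fun x ↦ ENNReal.ofReal (w x)) = ∫ x, f x * w x ∂μ := by
  rw [integral_withDensity_eq_integral_toReal_smul hw.ennreal_ofReal (by simp)]
  simp only [ENNReal.toReal_ofReal (hw_nonneg _), smul_eq_mul, mul_comm]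

lemma average_withDensity_ofReal (hw : Measurable w) (hw_nonneg : ∀ x, 0 ≤ w x) :
    ⨍ x, f x ∂μ.withDensity (fun x ↦ ENNReal.ofReal (w x)) =
      (∫ x, f x * w x ∂μ) / ∫ x, w x ∂μ := by
  have h_mass := integral_withDensity_ofReal (μ := μ) (f := fun _ ↦ 1) hw hw_nonneg
  simp only [integral_const, smul_eq_mul, mul_one, one_mul] at h_mass
  rw [average_eq, integral_withDensity_ofReal hw hw_nonneg, h_mass, smul_eq_mul, inv_mul_eq_div]

lemma neZero_of_isOpenPosMeasure [TopologicalSpace X] [Nonempty X] [μ.IsOpenPosMeasure] :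
    NeZero μ :=
  ⟨Measure.measure_univ_ne_zero.1 (isOpen_univ.measure_ne_zero μ univ_nonempty)⟩

lemma isOpenPosMeasure_withDensity_ofReal [TopologicalSpace X] [μ.IsOpenPosMeasure]
    (hw : Measurable w) (hw_pos : ∀ x, 0 < w x) :
    (μ.withDensity fun x ↦ ENNReal.ofReal (w x)).IsOpenPosMeasure :=
  (withDensity_absolutelyContinuous' hw.ennreal_ofReal.aemeasurable
    (.of_forall fun x ↦ (ENNReal.ofReal_pos.2 (hw_pos x)).ne')).isOpenPosMeasure

end WithDensity

section ProdRpow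

variable {ι X : Type*} {s : Finset ι} {w : ι → ℝ} {f : ι → X → ℝ}

lemma continuous_prod_rpow [TopologicalSpace X] (hw : ∀ i ∈ s, 0 ≤ w i)
    (hf : ∀ i ∈ s, Continuous (f i)) : Continuous fun x ↦ ∏ i ∈ s, f i x ^ w i :=
  continuous_finsetProd _ fun i hi ↦ (hf i hi).rpow_const fun _ ↦ .inr (hw i hi)

lemma integral_prod_div_rpow [MeasurableSpace X] {μ : Measure X} {a : ι → ℝ}
    (hf_nonneg : ∀ i ∈ s, ∀ x, 0 ≤ f i x) (ha : ∀ i ∈ s, 0 ≤ a i) :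
    ∫ x, ∏ i ∈ s, (f i x / a i) ^ w i ∂μ =
      (∫ x, ∏ i ∈ s, f i x ^ w i ∂μ) / ∏ i ∈ s, a i ^ w i := by
  rw [← integral_div]
  refine integral_congr_ae (.of_forall fun x ↦ ?_)
  simp only [← Finset.prod_div_distrib]
  exact Finset.prod_congr rfl fun i hi ↦ div_rpow (hf_nonneg i hi x) (ha i hi) _

lemma sum_inv_card_eq_one (hs : s.Nonempty) :
    ∑ _i ∈ s, (#s : ℝ)⁻¹ = 1 := by
  rw [Finset.sum_const, nsmul_eq_mul, mul_inv_cancel₀ (mod_cast hs.card_ne_zero)]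

lemma prod_pow_mul_rpow_inv_card (hs : s.Nonempty) {a : ι → ℝ} {q : ℝ} (ha : ∀ i ∈ s, 0 ≤ a i)
    (hq : 0 ≤ q) :
    ∏ i ∈ s, (a i ^ #s * q) ^ (#s : ℝ)⁻¹ = (∏ i ∈ s, a i) * q := by
  rw [Real.finsetProd_rpow s _ fun i hi ↦ mul_nonneg (pow_nonneg (ha i hi) _) hq,
    Finset.prod_mul_distrib, Finset.prod_pow, Finset.prod_const,
    mul_rpow (pow_nonneg (Finset.prod_nonneg ha) _) (pow_nonneg hq _),
    pow_rpow_inv_natCast (Finset.prod_nonneg ha) hs.card_ne_zero,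
    pow_rpow_inv_natCast hq hs.card_ne_zero]

end ProdRpow

section CompactSpace

variable {X : Type*} [TopologicalSpace X] [CompactSpace X] [MeasurableSpace X]
  [OpensMeasurableSpace X] {μ : Measure X} [IsFiniteMeasure μ]

lemma integrable_of_continuous {E : Type*} [NormedAddCommGroup E] {f : X → E}
    (hf : Continuous f) : Integrable f μ :=
  hf.integrable_of_hasCompactSupport (HasCompactSupport.of_compactSpace f)

lemma map_average_le_of_continuous [NeZero μ] {s : Set ℝ} {φ : ℝ → ℝ} {f : X → ℝ}
    (hφ : ConvexOn ℝ s φ) (hs : IsOpen s) (hf : Continuous f) (hfs : ∀ x, f x ∈ s) :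
    φ (⨍ x, f x ∂μ) ≤ ⨍ x, φ (f x) ∂μ := by
  have := μ.nonempty_of_neZero
  obtain ⟨a, b, hab, hfab⟩ := exists_Icc_subset_of_continuous hφ.1 hf hfs
  have hφ_cont : ContinuousOn φ s := hφ.continuousOn hs
  exact (hφ.subset hab (convex_Icc a b)).map_average_le (hφ_cont.mono hab) isClosed_Icc
    (.of_forall hfab) (integrable_of_continuous hf)
    (integrable_of_continuous (hφ_cont.comp_continuous hf hfs))

section AMGM

variable {ι : Type*} {s : Finset ι} {w : ι → ℝ} {f : ι → X → ℝ}

lemma integral_sum_mul_eq_one (hw_sum : ∑ i ∈ s, w i = 1) (hf : ∀ i ∈ s, Continuous (f i))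
    (hf_int : ∀ i ∈ s, ∫ x, f i x ∂μ = 1) : ∫ x, ∑ i ∈ s, w i * f i x ∂μ = 1 := by
  rw [← hw_sum,
    integral_finsetSum s fun i hi ↦ (integrable_of_continuous (hf i hi)).const_mul (w i)]
  exact Finset.sum_congr rfl fun i hi ↦ by rw [integral_const_mul, hf_int i hi, mul_one]

lemma integral_prod_rpow_le_one (hw : ∀ i ∈ s, 0 ≤ w i) (hw_sum : ∑ i ∈ s, w i = 1)
    (hf : ∀ i ∈ s, Continuous (f i)) (hf_nonneg : ∀ i ∈ s, ∀ x, 0 ≤ f i x)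
    (hf_int : ∀ i ∈ s, ∫ x, f i x ∂μ = 1) : ∫ x, ∏ i ∈ s, f i x ^ w i ∂μ ≤ 1 := by
  rw [← integral_sum_mul_eq_one hw_sum hf hf_int]
  exact integral_mono (integrable_of_continuous (continuous_prod_rpow hw hf))
    (integrable_of_continuous (continuous_finsetSum s fun i hi ↦ (hf i hi).const_mul (w i)))
    fun x ↦ geom_mean_le_arith_mean_weighted s w _ hw hw_sum fun i hi ↦ hf_nonneg i hi x

end AMGM

variable [μ.IsOpenPosMeasure]

lemma integral_pos_of_continuous [Nonempty X] {f : X → ℝ} (hf : Continuous f)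
    (hf_pos : ∀ x, 0 < f x) : 0 < ∫ x, f x ∂μ := by
  obtain ⟨x⟩ := ‹Nonempty X›
  exact hf.integral_pos_of_hasCompactSupport_nonneg_nonzero (HasCompactSupport.of_compactSpace f)
    (fun x ↦ (hf_pos x).le) (hf_pos x).ne'

lemma integral_eq_integral_iff_of_continuous_of_le {f g : X → ℝ} (hf : Continuous f)
    (hg : Continuous g) (hfg : ∀ x, f x ≤ g x) :
    ∫ x, f x ∂μ = ∫ x, g x ∂μ ↔ ∀ x, f x = g x := by
  rw [integral_eq_iff_of_ae_le (integrable_of_continuous hf) (integrable_of_continuous hg)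
    (.of_forall hfg), hf.ae_eq_iff_eq μ hg, funext_iff]

section Jensen

variable [Nonempty X] {s : Set ℝ} {φ : ℝ → ℝ} {f w : X → ℝ}

lemma average_map_eq_iff_of_continuous (hφ : StrictConvexOn ℝ s φ) (hs : IsOpen s)
    (hf : Continuous f) (hfs : ∀ x, f x ∈ s) :
    ⨍ x, φ (f x) ∂μ = φ (⨍ x, f x ∂μ) ↔ ∃ c, ∀ x, f x = c := by
  obtain ⟨a, b, hab, hfab⟩ := exists_Icc_subset_of_continuous hφ.1 hf hfs
  have hφ_cont : ContinuousOn φ s := hφ.convexOn.continuousOn hs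
  have := neZero_of_isOpenPosMeasure (μ := μ)
  constructor
  · intro h_eq
    have h_const := ((hφ.subset hab (convex_Icc a b)).ae_eq_const_or_map_average_lt
      (hφ_cont.mono hab) isClosed_Icc (.of_forall hfab) (integrable_of_continuous hf)
      (integrable_of_continuous (hφ_cont.comp_continuous hf hfs))).resolve_right h_eq.not_gt
    exact ⟨_, congrFun (((hf.ae_eq_iff_eq μ) continuous_const).1 h_const)⟩
  · rintro ⟨c, hc⟩
    simp only [hc, average_const]

lemma integral_mul_map_div_le (hφ : ConvexOn ℝ s φ) (hs : IsOpen s) (hf : Continuous f)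
    (hfs : ∀ x, f x ∈ s) (hw : Continuous w) (hw_pos : ∀ x, 0 < w x) :
    (∫ x, w x ∂μ) * φ ((∫ x, f x * w x ∂μ) / ∫ x, w x ∂μ) ≤ ∫ x, φ (f x) * w x ∂μ := by
  have := isFiniteMeasure_withDensity_ofReal (integrable_of_continuous (μ := μ) hw).2
  have := isOpenPosMeasure_withDensity_ofReal (μ := μ) hw.measurable hw_pos
  have := neZero_of_isOpenPosMeasure (μ := μ.withDensity fun x ↦ ENNReal.ofReal (w x))
  have h_jensen := map_average_le_of_continuous
    (μ := μ.withDensity fun x ↦ ENNReal.ofReal (w x)) hφ hs hf hfs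
  rwa [average_withDensity_ofReal hw.measurable fun x ↦ (hw_pos x).le,
    average_withDensity_ofReal hw.measurable fun x ↦ (hw_pos x).le,
    le_div_iff₀' (integral_pos_of_continuous hw hw_pos)] at h_jensen

lemma integral_map_mul_eq_iff (hφ : StrictConvexOn ℝ s φ) (hs : IsOpen s) (hf : Continuous f)
    (hfs : ∀ x, f x ∈ s) (hw : Continuous w) (hw_pos : ∀ x, 0 < w x) :
    ∫ x, φ (f x) * w x ∂μ = (∫ x, w x ∂μ) * φ ((∫ x, f x * w x ∂μ) / ∫ x, w x ∂μ) ↔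
      ∃ c, ∀ x, f x = c := by
  have := isFiniteMeasure_withDensity_ofReal (integrable_of_continuous (μ := μ) hw).2
  have := isOpenPosMeasure_withDensity_ofReal (μ := μ) hw.measurable hw_pos
  rw [← average_map_eq_iff_of_continuous (μ := μ.withDensity fun x ↦ ENNReal.ofReal (w x))
      hφ hs hf hfs, average_withDensity_ofReal hw.measurable fun x ↦ (hw_pos x).le,
    average_withDensity_ofReal hw.measurable fun x ↦ (hw_pos x).le,
    div_eq_iff (integral_pos_of_continuous hw hw_pos).ne', mul_comm]

end Jensen

lemma isDilate_iff_div_integral_eq [Nonempty X] {f g : X → ℝ} (hf : Continuous f)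
    (hf_pos : ∀ x, 0 < f x) (hg : Continuous g) (hg_pos : ∀ x, 0 < g x) :
    IsDilate f g ↔ ∀ x, f x / ∫ y, f y ∂μ = g x / ∫ y, g y ∂μ := by
  have hF : 0 < ∫ y, f y ∂μ := integral_pos_of_continuous hf hf_pos
  have hG : 0 < ∫ y, g y ∂μ := integral_pos_of_continuous hg hg_pos
  constructor
  · rintro ⟨c, hc, hfg⟩ x
    simp only [hfg, integral_const_mul, mul_div_mul_left _ _ hc.ne']
  · refine fun h ↦ ⟨(∫ y, f y ∂μ) / ∫ y, g y ∂μ, div_pos hF hG, fun x ↦ ?_⟩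
    rw [(div_eq_iff hF.ne').1 (h x)]
    ring

section Hoelder

variable {ι : Type*} {s : Finset ι} {w : ι → ℝ} {f : ι → X → ℝ}

lemma integral_prod_rpow_eq_one_iff (hw : ∀ i ∈ s, 0 < w i) (hw_sum : ∑ i ∈ s, w i = 1)
    (hf : ∀ i ∈ s, Continuous (f i)) (hf_nonneg : ∀ i ∈ s, ∀ x, 0 ≤ f i x)
    (hf_int : ∀ i ∈ s, ∫ x, f i x ∂μ = 1) :
    ∫ x, ∏ i ∈ s, f i x ^ w i ∂μ = 1 ↔ ∀ i ∈ s, ∀ j ∈ s, ∀ x, f i x = f j x := by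
  rw [← integral_sum_mul_eq_one hw_sum hf hf_int, integral_eq_integral_iff_of_continuous_of_le
    (continuous_prod_rpow (fun i hi ↦ (hw i hi).le) hf)
    (continuous_finsetSum s fun i hi ↦ (hf i hi).const_mul (w i))
    fun x ↦ geom_mean_le_arith_mean_weighted s w _ (fun i hi ↦ (hw i hi).le) hw_sum
      fun i hi ↦ hf_nonneg i hi x]
  simp only [geom_mean_eq_arith_mean_weighted_iff_of_pos s w (f · _) hw hw_sum
    fun i hi ↦ hf_nonneg i hi _]
  exact ⟨fun h i hi j hj x ↦ h x i hi j hj, fun h x i hi j hj ↦ h i hi j hj x⟩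

variable [Nonempty X]

theorem integral_prod_rpow_le_prod_integral_rpow (hw : ∀ i ∈ s, 0 ≤ w i)
    (hw_sum : ∑ i ∈ s, w i = 1) (hf : ∀ i ∈ s, Continuous (f i))
    (hf_pos : ∀ i ∈ s, ∀ x, 0 < f i x) :
    ∫ x, ∏ i ∈ s, f i x ^ w i ∂μ ≤ ∏ i ∈ s, (∫ x, f i x ∂μ) ^ w i := by
  have h_pos : ∀ i ∈ s, 0 < ∫ x, f i x ∂μ := fun i hi ↦
    integral_pos_of_continuous (hf i hi) (hf_pos i hi)
  rw [← div_le_one (Finset.prod_pos fun i hi ↦ rpow_pos_of_pos (h_pos i hi) _),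
    ← integral_prod_div_rpow (fun i hi x ↦ (hf_pos i hi x).le) fun i hi ↦ (h_pos i hi).le]
  exact integral_prod_rpow_le_one hw hw_sum (fun i hi ↦ (hf i hi).div_const _)
    (fun i hi x ↦ (div_pos (hf_pos i hi x) (h_pos i hi)).le)
    fun i hi ↦ by rw [integral_div, div_self (h_pos i hi).ne']

theorem integral_prod_rpow_eq_prod_integral_rpow_iff (hw : ∀ i ∈ s, 0 < w i)
    (hw_sum : ∑ i ∈ s, w i = 1) (hf : ∀ i ∈ s, Continuous (f i))
    (hf_pos : ∀ i ∈ s, ∀ x, 0 < f i x) :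
    ∫ x, ∏ i ∈ s, f i x ^ w i ∂μ = ∏ i ∈ s, (∫ x, f i x ∂μ) ^ w i ↔
      ∀ i ∈ s, ∀ j ∈ s, IsDilate (f i) (f j) := by
  have h_pos : ∀ i ∈ s, 0 < ∫ x, f i x ∂μ := fun i hi ↦
    integral_pos_of_continuous (hf i hi) (hf_pos i hi)
  rw [← div_eq_one_iff_eq (Finset.prod_pos fun i hi ↦ rpow_pos_of_pos (h_pos i hi) _).ne',
    ← integral_prod_div_rpow (fun i hi x ↦ (hf_pos i hi x).le) fun i hi ↦ (h_pos i hi).le,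
    integral_prod_rpow_eq_one_iff hw hw_sum (fun i hi ↦ (hf i hi).div_const _)
      (fun i hi x ↦ (div_pos (hf_pos i hi x) (h_pos i hi)).le)
      fun i hi ↦ by rw [integral_div, div_self (h_pos i hi).ne']]
  exact forall₂_congr fun i hi ↦ forall₂_congr fun j hj ↦
    (isDilate_iff_div_integral_eq (hf i hi) (hf_pos i hi) (hf j hj) (hf_pos j hj)).symm

end Hoelder

section DualMixedVolume

variable [Nonempty X]

section Minkowski

variable {K L P : X → ℝ} {φ : ℝ → ℝ}

theorem dual_orlicz_minkowski (hφ : ConvexOn ℝ (Ioi 0) φ) (hK : Continuous K)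
    (hK_pos : ∀ x, 0 < K x) (hL : Continuous L) (hL_pos : ∀ x, 0 < L x) (hP : Continuous P)
    (hP_pos : ∀ x, 0 < P x) :
    (∫ x, L x * P x ∂μ) * φ ((∫ x, K x * P x ∂μ) / ∫ x, L x * P x ∂μ) ≤
      ∫ x, φ (K x / L x) * (L x * P x) ∂μ := by
  have h_cancel (x : X) : K x / L x * (L x * P x) = K x * P x := by
    rw [← mul_assoc, div_mul_cancel₀ _ (hL_pos x).ne']
  simpa only [h_cancel] using integral_mul_map_div_le (μ := μ)
    (f := fun x ↦ K x / L x) (w := fun x ↦ L x * P x) hφ isOpen_Ioi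
    (hK.div hL fun x ↦ (hL_pos x).ne') (fun x ↦ div_pos (hK_pos x) (hL_pos x)) (hL.mul hP)
    fun x ↦ mul_pos (hL_pos x) (hP_pos x)

theorem dual_orlicz_minkowski_eq_iff (hφ : StrictConvexOn ℝ (Ioi 0) φ) (hK : Continuous K)
    (hK_pos : ∀ x, 0 < K x) (hL : Continuous L) (hL_pos : ∀ x, 0 < L x) (hP : Continuous P)
    (hP_pos : ∀ x, 0 < P x) :
    ∫ x, φ (K x / L x) * (L x * P x) ∂μ =
        (∫ x, L x * P x ∂μ) * φ ((∫ x, K x * P x ∂μ) / ∫ x, L x * P x ∂μ) ↔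
      IsDilate K L := by
  have h_cancel (x : X) : K x / L x * (L x * P x) = K x * P x := by
    rw [← mul_assoc, div_mul_cancel₀ _ (hL_pos x).ne']
  simpa only [h_cancel, isDilate_iff_exists_div_eq hK_pos hL_pos] using
    integral_map_mul_eq_iff (μ := μ) (f := fun x ↦ K x / L x) (w := fun x ↦ L x * P x) hφ
      isOpen_Ioi (hK.div hL fun x ↦ (hL_pos x).ne')
      (fun x ↦ div_pos (hK_pos x) (hL_pos x)) (hL.mul hP) fun x ↦ mul_pos (hL_pos x) (hP_pos x)

end Minkowski

section AleksandrovFenchel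

variable {ι : Type*} {s : Finset ι} {K : ι → X → ℝ} {Q : X → ℝ}

theorem dual_aleksandrov_fenchel (hs : s.Nonempty) (hK : ∀ i ∈ s, Continuous (K i))
    (hK_pos : ∀ i ∈ s, ∀ x, 0 < K i x) (hQ : Continuous Q) (hQ_pos : ∀ x, 0 < Q x) :
    ∫ x, (∏ i ∈ s, K i x) * Q x ∂μ ≤
      ∏ i ∈ s, (∫ x, K i x ^ #s * Q x ∂μ) ^ (#s : ℝ)⁻¹ := by
  simp only [← prod_pow_mul_rpow_inv_card hs (fun i hi ↦ (hK_pos i hi _).le) (hQ_pos _).le]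
  exact integral_prod_rpow_le_prod_integral_rpow (fun _ _ ↦ inv_nonneg.2 (Nat.cast_nonneg _))
    (sum_inv_card_eq_one hs) (fun i hi ↦ ((hK i hi).pow _).mul hQ)
    fun i hi x ↦ mul_pos (pow_pos (hK_pos i hi x) _) (hQ_pos x)

theorem dual_aleksandrov_fenchel_eq_iff (hs : s.Nonempty) (hK : ∀ i ∈ s, Continuous (K i))
    (hK_pos : ∀ i ∈ s, ∀ x, 0 < K i x) (hQ : Continuous Q) (hQ_pos : ∀ x, 0 < Q x) :
    ∫ x, (∏ i ∈ s, K i x) * Q x ∂μ = ∏ i ∈ s, (∫ x, K i x ^ #s * Q x ∂μ) ^ (#s : ℝ)⁻¹ ↔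
      ∀ i ∈ s, ∀ j ∈ s, IsDilate (K i) (K j) := by
  simp only [← prod_pow_mul_rpow_inv_card hs (fun i hi ↦ (hK_pos i hi _).le) (hQ_pos _).le]
  rw [integral_prod_rpow_eq_prod_integral_rpow_iff
    (f := fun i x ↦ K i x ^ #s * Q x) (fun _ _ ↦ inv_pos.2 (mod_cast hs.card_pos))
    (sum_inv_card_eq_one hs)
    (fun i hi ↦ ((hK i hi).pow _).mul hQ)
    fun i hi x ↦ mul_pos (pow_pos (hK_pos i hi x) _) (hQ_pos x)]
  exact forall₂_congr fun i hi ↦ forall₂_congr fun j hj ↦ isDilate_pow_mul_iff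
    (fun x ↦ (hK_pos i hi x).le) (fun x ↦ (hK_pos j hj x).le) (fun x ↦ (hQ_pos x).ne')
    hs.card_ne_zero

end AleksandrovFenchel

section OrliczAleksandrovFenchel

variable {ι : Type*} [DecidableEq ι] {s : Finset ι} {i₀ : ι} {K : ι → X → ℝ} {L Q : X → ℝ}
  {φ : ℝ → ℝ}

theorem dual_orlicz_aleksandrov_fenchel_finset (hφ : ConvexOn ℝ (Ioi 0) φ)
    (hφ_anti : AntitoneOn φ (Ioi 0)) (hi₀ : i₀ ∈ s) (hK : ∀ i ∈ s, Continuous (K i))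
    (hK_pos : ∀ i ∈ s, ∀ x, 0 < K i x) (hL : Continuous L) (hL_pos : ∀ x, 0 < L x)
    (hQ : Continuous Q) (hQ_pos : ∀ x, 0 < Q x) :
    (∫ x, L x * ((∏ i ∈ s.erase i₀, K i x) * Q x) ∂μ) *
        φ ((∏ i ∈ s, (∫ x, K i x ^ #s * Q x ∂μ) ^ (#s : ℝ)⁻¹) /
          ∫ x, L x * ((∏ i ∈ s.erase i₀, K i x) * Q x) ∂μ) ≤
        ∫ x, φ (K i₀ x / L x) * (L x * ((∏ i ∈ s.erase i₀, K i x) * Q x)) ∂μ ∧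
      (StrictConvexOn ℝ (Ioi 0) φ →
        (∫ x, φ (K i₀ x / L x) * (L x * ((∏ i ∈ s.erase i₀, K i x) * Q x)) ∂μ =
            (∫ x, L x * ((∏ i ∈ s.erase i₀, K i x) * Q x) ∂μ) *
              φ ((∏ i ∈ s, (∫ x, K i x ^ #s * Q x ∂μ) ^ (#s : ℝ)⁻¹) /
                ∫ x, L x * ((∏ i ∈ s.erase i₀, K i x) * Q x) ∂μ) ↔
          ∀ i ∈ s, IsDilate (K i) L)) := by
  set P : X → ℝ := fun x ↦ (∏ i ∈ s.erase i₀, K i x) * Q x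
  have hP : Continuous P :=
    (continuous_finsetProd _ fun i hi ↦ hK i (Finset.mem_of_mem_erase hi)).mul hQ
  have hP_pos : ∀ x, 0 < P x := fun x ↦
    mul_pos (Finset.prod_pos fun i hi ↦ hK_pos i (Finset.mem_of_mem_erase hi) x) (hQ_pos x)
  have hKP (x : X) : (∏ i ∈ s, K i x) * Q x = K i₀ x * P x := by
    rw [← Finset.mul_prod_erase s (K · x) hi₀, mul_assoc]
  have hVL : 0 < ∫ x, L x * P x ∂μ :=
    integral_pos_of_continuous (hL.mul hP) fun x ↦ mul_pos (hL_pos x) (hP_pos x)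
  have hT : 0 < ∫ x, K i₀ x * P x ∂μ :=
    integral_pos_of_continuous ((hK i₀ hi₀).mul hP) fun x ↦ mul_pos (hK_pos i₀ hi₀ x) (hP_pos x)
  have h_fenchel := dual_aleksandrov_fenchel (μ := μ) ⟨i₀, hi₀⟩ hK hK_pos hQ hQ_pos
  have h_fenchel_eq := dual_aleksandrov_fenchel_eq_iff (μ := μ) ⟨i₀, hi₀⟩ hK hK_pos hQ hQ_pos
  simp only [hKP] at h_fenchel h_fenchel_eq
  have h_anti := mul_map_div_le_mul_map_div hφ_anti hVL hT h_fenchel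
  have h_minkowski :=
    dual_orlicz_minkowski (μ := μ) hφ (hK i₀ hi₀) (hK_pos i₀ hi₀) hL hL_pos hP hP_pos
  refine ⟨h_anti.trans h_minkowski, fun hφ_strict ↦ ?_⟩
  have h_inj := (strictAntiOn_of_strictConvexOn_of_antitoneOn hφ_strict hφ_anti).injOn
  rw [eq_iff_eq_and_eq_of_le_of_le h_anti h_minkowski,
    dual_orlicz_minkowski_eq_iff hφ_strict (hK i₀ hi₀) (hK_pos i₀ hi₀) hL hL_pos hP hP_pos,
    mul_map_div_eq_mul_map_div_iff h_inj hVL hT (hT.trans_le h_fenchel), h_fenchel_eq]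
  exact ⟨fun ⟨h₀, h⟩ i hi ↦ (h i hi i₀ hi₀).trans h₀,
    fun h ↦ ⟨h i₀ hi₀, fun i hi j hj ↦ (h i hi).trans (h j hj).symm⟩⟩

end OrliczAleksandrovFenchel

end DualMixedVolume

end CompactSpace

lemma prod_Icc_erase_one_mul_prod_Icc {M : Type*} [CommMonoid M] (f : ℕ → M) {n r : ℕ}
    (hr : 1 ≤ r) (hrn : r ≤ n) :
    (∏ i ∈ (Finset.Icc 1 r).erase 1, f i) * ∏ i ∈ Finset.Icc (r + 1) n, f i =
      ∏ i ∈ Finset.Icc 2 n, f i := by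
  rw [Finset.Icc_erase_left, Finset.Icc_add_one_left_eq_Ioc, Finset.prod_Ioc_consecutive f hr hrn,
    ← Finset.Icc_add_one_left_eq_Ioc, one_add_one_eq_two]

theorem dual_orlicz_aleksandrov_fenchel_general {X : Type*} [TopologicalSpace X] [CompactSpace X]
    [Nonempty X] [MeasurableSpace X] [OpensMeasurableSpace X] {μ : Measure X} [IsFiniteMeasure μ]
    [μ.IsOpenPosMeasure] {a : ℝ} (ha : 0 < a) (n r : ℕ) (hr1 : 1 ≤ r) (hrn : r ≤ n) (φ : ℝ → ℝ)
    (hφconv : ConvexOn ℝ (Ioi 0) φ) (hφanti : AntitoneOn φ (Ioi 0))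
    (ρL : X → ℝ) (ρ : ℕ → X → ℝ) (hLc : Continuous ρL) (hLpos : ∀ u, 0 < ρL u)
    (hc : ∀ i, 1 ≤ i → i ≤ n → Continuous (ρ i)) (hpos : ∀ i, 1 ≤ i → i ≤ n → ∀ u, 0 < ρ i u)
    (Vφ VL : ℝ) (VAF : ℕ → ℝ)
    (hVφ : Vφ = a * ∫ u, φ (ρ 1 u / ρL u) * (ρL u * ∏ j ∈ Finset.Icc 2 n, ρ j u) ∂μ)
    (hVL : VL = a * ∫ u, ρL u * ∏ j ∈ Finset.Icc 2 n, ρ j u ∂μ)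
    (hVAF : ∀ i, VAF i = a * ∫ u, ρ i u ^ r * ∏ j ∈ Finset.Icc (r + 1) n, ρ j u ∂μ) :
    Vφ ≥ VL * φ ((∏ i ∈ Finset.Icc 1 r, VAF i ^ (r : ℝ)⁻¹) / VL) ∧
      (StrictConvexOn ℝ (Ioi 0) φ →
        (Vφ = VL * φ ((∏ i ∈ Finset.Icc 1 r, VAF i ^ (r : ℝ)⁻¹) / VL) ↔
          ∀ i, 1 ≤ i → i ≤ r → IsDilate (ρ i) ρL)) := by
  let Q : X → ℝ := fun u ↦ a * ∏ j ∈ Finset.Icc (r + 1) n, ρ j u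
  have hP (u : X) : (∏ i ∈ (Finset.Icc 1 r).erase 1, ρ i u) * Q u =
      a * ∏ j ∈ Finset.Icc 2 n, ρ j u := by
    rw [← prod_Icc_erase_one_mul_prod_Icc (ρ · u) hr1 hrn, mul_left_comm]
  have h_head : ∀ i ∈ Finset.Icc 1 r, 1 ≤ i ∧ i ≤ n := fun i hi ↦ by
    rw [Finset.mem_Icc] at hi
    omega
  have h_tail : ∀ j ∈ Finset.Icc (r + 1) n, 1 ≤ j ∧ j ≤ n := fun j hj ↦ by
    rw [Finset.mem_Icc] at hj
    omega
  have hQ : Continuous Q := continuous_const.mul <| continuous_finsetProd _ fun j hj ↦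
    hc j (h_tail j hj).1 (h_tail j hj).2
  have hQ_pos : ∀ u, 0 < Q u := fun u ↦ mul_pos ha <| Finset.prod_pos fun j hj ↦
    hpos j (h_tail j hj).1 (h_tail j hj).2 u
  have h_main := dual_orlicz_aleksandrov_fenchel_finset (μ := μ) hφconv hφanti
    (Finset.mem_Icc.2 ⟨le_rfl, hr1⟩) (fun i hi ↦ hc i (h_head i hi).1 (h_head i hi).2)
    (fun i hi ↦ hpos i (h_head i hi).1 (h_head i hi).2) hLc hLpos hQ hQ_pos
  simpa only [hP, Q, Nat.card_Icc, Nat.add_sub_cancel, Finset.mem_Icc, and_imp,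
    mul_left_comm _ a, integral_const_mul, ← hVφ, ← hVL, ← hVAF] using h_main

/-- The dual Orlicz–Aleksandrov–Fenchel inequality:
`Ṽ_φ(L₁,K₁,K₂,...,Kₙ) ≥ Ṽ(L₁,K₂,...,Kₙ)·φ(∏_{i=1}^r Ṽ(Kᵢ[r],K_{r+1},...,Kₙ)^{1/r}/Ṽ(L₁,K₂,...,Kₙ))`;
if `φ` is strictly convex, equality holds iff `L₁,K₁,...,K_r` are all dilations of
each other. The star bodies `K₁,...,Kₙ` have radial functions `ρ 1, ..., ρ n`. -/
theorem dual_orlicz_aleksandrov_fenchel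
    (n r : ℕ) (hr1 : 1 ≤ r) (hrn : r ≤ n)
    (φ : ℝ → ℝ)
    (hφconv : ConvexOn ℝ (Ioi 0) φ)
    (hφanti : StrictAntiOn φ (Ioi 0))
    (hφpos : ∀ t ∈ Ioi (0 : ℝ), 0 < φ t)
    (ρL : sphere (0 : EuclideanSpace ℝ (Fin n)) 1 → ℝ)
    (ρ : ℕ → (sphere (0 : EuclideanSpace ℝ (Fin n)) 1 → ℝ))
    (hLc : Continuous ρL) (hLpos : ∀ u, 0 < ρL u)
    (hc : ∀ i, 1 ≤ i → i ≤ n → Continuous (ρ i))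
    (hpos : ∀ i, 1 ≤ i → i ≤ n → ∀ u, 0 < ρ i u)
    (Vφ VL : ℝ) (VAF : ℕ → ℝ)
    (hVφ : Vφ = (1 / n) * ∫ u,
      φ (ρ 1 u / ρL u) * (ρL u * ∏ j ∈ Finset.Icc 2 n, ρ j u) ∂(sphereσ n))
    (hVL : VL = (1 / n) * ∫ u, ρL u * ∏ j ∈ Finset.Icc 2 n, ρ j u ∂(sphereσ n))
    (hVAF : ∀ i, VAF i =
      (1 / n) * ∫ u, (ρ i u) ^ r * ∏ j ∈ Finset.Icc (r + 1) n, ρ j u ∂(sphereσ n)) :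
    Vφ ≥ VL * φ ((∏ i ∈ Finset.Icc 1 r, (VAF i) ^ ((r : ℝ)⁻¹)) / VL) ∧
      (StrictConvexOn ℝ (Ioi 0) φ →
        (Vφ = VL * φ ((∏ i ∈ Finset.Icc 1 r, (VAF i) ^ ((r : ℝ)⁻¹)) / VL) ↔
          ∀ i, 1 ≤ i → i ≤ r → ∃ c : ℝ, 0 < c ∧ ∀ u, ρ i u = c * ρL u)) := by
  have : NeZero n := ⟨by omega⟩
  have : Nonempty (sphere (0 : EuclideanSpace ℝ (Fin n)) 1) :=
    (NormedSpace.sphere_nonempty.2 zero_le_one).coe_sort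
  exact dual_orlicz_aleksandrov_fenchel_general (one_div_pos.2 (mod_cast hr1.trans hrn)) n r hr1
    hrn φ hφconv hφanti.antitoneOn ρL ρ hLc hLpos hc hpos Vφ VL VAF hVφ hVL hVAF
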